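/- The assignment σ₁ ↦ S = [[1,1],[0,1]] and σ₂ ↦ T = [[1,0],[-1,1]] extends to a surjective group homomorphism φ : B₃ → SL₂(ℤ), and the kernel of φ is the cyclic subgroup generated by Δ⁴, where Δ = σ₁σ₂σ₁. -/

import Mathlib

/-!
Put `a = σ₁σ₂` and `C = Δ²`. The braid relation gives `a³ = C`, `σ₁ = a⁻¹Δ` and `σ₂ = Δa⁻¹`, so `C`
commutes with the generators `a` and `Δ` and is central. Modulo `C`, every element is an alternating
product of `Δ` and `a^{±1}`; since `Δa = Cσ₁⁻¹` and `Δa⁻¹ = σ₂`, it can be written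
`C^k a^i w Δ^e` with `i ∈ {-1, 0, 1}`, `e ∈ {0, 1}` and `w` a product of letters `σ₂` and `σ₁⁻¹`
(`exists_normalForm`).

The matrices `T` and `S⁻¹` both have diagonal entries `1` and nonpositive off-diagonal entries, so a
nonempty product of them has positive diagonal, nonpositive off-diagonal, and off-diagonal not
identically zero (`PosWord.matrix`). As `φ(C) = -1`, an element `C^k a^i w Δ^e` of the kernel has
`φ(w) = ± φ(a)^{-i} φ(Δ)^{-e}`, and among the six matrices on the right, taken with both signs, only
the identity has positive diagonal and nonpositive off-diagonal entries. Hence `w = 1`, `i = e = 0`,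
and `k` is even.
Surjectivity holds because `φ(Δ⁻¹)` and `φ(σ₁)` are the standard generators of `SL₂(ℤ)`.
-/

/-- The braid relation σ₁σ₂σ₁ = σ₂σ₁σ₂ as a relator in the free group on two generators. -/
def braidRel : Set (FreeGroup (Fin 2)) :=
  {FreeGroup.of 0 * FreeGroup.of 1 * FreeGroup.of 0 *
    (FreeGroup.of 1 * FreeGroup.of 0 * FreeGroup.of 1)⁻¹}

/-- The braid group B₃ = ⟨σ₁, σ₂ | σ₁σ₂σ₁ = σ₂σ₁σ₂⟩. -/
abbrev B3 : Type := PresentedGroup braidRel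

/-- The first Artin generator of B₃. -/
def σ₁ : B3 := PresentedGroup.of 0

/-- The second Artin generator of B₃. -/
def σ₂ : B3 := PresentedGroup.of 1

/-- The Garside element Δ = σ₁σ₂σ₁ of B₃. -/
def Δ : B3 := σ₁ * σ₂ * σ₁

/-- The matrix S = [[1,1],[0,1]] as an element of SL₂(ℤ). -/
def S : Matrix.SpecialLinearGroup (Fin 2) ℤ :=
  ⟨!![1, 1; 0, 1], by norm_num [Matrix.det_fin_two_of]⟩

/-- The matrix T = [[1,0],[-1,1]] as an element of SL₂(ℤ). -/
def T : Matrix.SpecialLinearGroup (Fin 2) ℤ :=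
  ⟨!![1, 0; -1, 1], by norm_num [Matrix.det_fin_two_of]⟩

namespace BraidSL2

lemma braid_rel : σ₁ * σ₂ * σ₁ = σ₂ * σ₁ * σ₂ := by
  have h : PresentedGroup.mk braidRel (FreeGroup.of 0 * FreeGroup.of 1 * FreeGroup.of 0 *
      (FreeGroup.of 1 * FreeGroup.of 0 * FreeGroup.of 1)⁻¹) = 1 :=
    PresentedGroup.one_of_mem rfl
  rw [map_mul, map_inv, mul_inv_eq_one] at h
  simp only [map_mul] at h
  exact h

/-- The element `σ₁σ₂`, of order three modulo the centre. -/
def a : B3 := σ₁ * σ₂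

/-- The full twist `Δ²`, which generates the centre. -/
def C : B3 := Δ * Δ

lemma Δ_eq_a_mul : Δ = a * σ₁ := rfl

lemma Δ_eq_mul_a : Δ = σ₂ * a := by
  rw [Δ, braid_rel, a, mul_assoc]

lemma σ₁_eq : σ₁ = a⁻¹ * Δ := by rw [Δ_eq_a_mul]; group

lemma σ₂_eq : σ₂ = Δ * a⁻¹ := by rw [Δ_eq_mul_a]; group

lemma a_cube : a * a * a = C := by
  have h : C = (a * σ₁) * (σ₂ * a) := by rw [← Δ_eq_a_mul, ← Δ_eq_mul_a]; rfl
  rw [h, a]; group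

lemma induction_gen {p : B3 → Prop} (one : p 1)
    (h₁ : ∀ g, p g → p (σ₁ * g)) (h₁' : ∀ g, p g → p (σ₁⁻¹ * g))
    (h₂ : ∀ g, p g → p (σ₂ * g)) (h₂' : ∀ g, p g → p (σ₂⁻¹ * g)) (g : B3) : p g := by
  have hg : g ∈ Subgroup.closure (Set.range (PresentedGroup.of (rels := braidRel))) := by
    rw [PresentedGroup.closure_range_of]; trivial
  induction hg using Subgroup.closure_induction_left with
  | one => exact one
  | mul_left x hx y _ ih =>
    obtain ⟨i, rfl⟩ := hx
    fin_cases i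
    · exact h₁ _ ih
    · exact h₂ _ ih
  | inv_mul_cancel x hx y _ ih =>
    obtain ⟨i, rfl⟩ := hx
    fin_cases i
    · exact h₁' _ ih
    · exact h₂' _ ih

lemma C_comm (g : B3) : Commute C g := by
  have hΔ : Commute C Δ := (Commute.refl Δ).mul_left (Commute.refl Δ)
  have ha : Commute C a := by
    rw [← a_cube]
    exact ((Commute.refl a).mul_left (Commute.refl a)).mul_left (Commute.refl a)
  have h₁ : Commute C σ₁ := by rw [σ₁_eq]; exact ha.inv_right.mul_right hΔ
  have h₂ : Commute C σ₂ := by rw [σ₂_eq]; exact hΔ.mul_right ha.inv_right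
  induction g using induction_gen with
  | one => exact Commute.one_right _
  | h₁ g ih => exact h₁.mul_right ih
  | h₁' g ih => exact h₁.inv_right.mul_right ih
  | h₂ g ih => exact h₂.mul_right ih
  | h₂' g ih => exact h₂.inv_right.mul_right ih

/-- The elements of the submonoid of `B₃` generated by `σ₂` and `σ₁⁻¹`. -/
inductive PosWord : B3 → Prop
  | one : PosWord 1
  | cons_σ₂ {w : B3} : PosWord w → PosWord (σ₂ * w)
  | cons_σ₁_inv {w : B3} : PosWord w → PosWord (σ₁⁻¹ * w)

/-- `g` has the form `C^k a^i w Δ^e` with `i ∈ {0, 1, -1}`, `e ∈ {0, 1}` and `w` a word in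
`σ₂` and `σ₁⁻¹`. -/
def NormalForm (g : B3) : Prop :=
  ∃ (k : ℤ) (b w d : B3), (b = 1 ∨ b = a ∨ b = a⁻¹) ∧ PosWord w ∧ (d = 1 ∨ d = Δ) ∧
    g = C ^ k * (b * w * d)

lemma NormalForm.zpow_mul {g : B3} (hg : NormalForm g) (n : ℤ) : NormalForm (C ^ n * g) := by
  obtain ⟨k, b, w, d, hb, hw, hd, rfl⟩ := hg
  exact ⟨n + k, b, w, d, hb, hw, hd, by rw [zpow_add, mul_assoc (C ^ n)]⟩

lemma NormalForm.of_eq {g h : B3} (hg : NormalForm g) (n : ℤ) (e : h = C ^ n * g) :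
    NormalForm h := e ▸ hg.zpow_mul n

lemma mul_zpow_left (x y : B3) (k : ℤ) : x * (C ^ k * y) = C ^ k * (x * y) := by
  rw [← mul_assoc, ← ((C_comm x).zpow_left k).eq, mul_assoc]

lemma NormalForm.a_mul {g : B3} (hg : NormalForm g) : NormalForm (a * g) := by
  obtain ⟨k, b, w, d, hb, hw, hd, rfl⟩ := hg
  rw [mul_zpow_left]
  refine NormalForm.zpow_mul ?_ k
  rcases hb with rfl | rfl | rfl
  · exact ⟨0, a, w, d, by simp, hw, hd, by group⟩
  · exact ⟨1, a⁻¹, w, d, by simp, hw, hd, by rw [← a_cube]; group⟩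
  · exact ⟨0, 1, w, d, by simp, hw, hd, by group⟩

lemma NormalForm.Δ_mul {g : B3} (hg : NormalForm g) : NormalForm (Δ * g) := by
  obtain ⟨k, b, w, d, hb, hw, hd, rfl⟩ := hg
  rw [mul_zpow_left]
  refine NormalForm.zpow_mul ?_ k
  rcases hb with rfl | rfl | rfl
  · cases hw with
    | one =>
      rcases hd with rfl | rfl
      · exact ⟨0, 1, 1, Δ, by simp, .one, by simp, by group⟩
      · exact ⟨1, 1, 1, 1, by simp, .one, by simp, by simp [C]⟩
    | @cons_σ₂ w hw =>
      exact ⟨1, a⁻¹, w, d, by simp, hw, hd, by rw [σ₂_eq, C]; group⟩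
    | @cons_σ₁_inv w hw =>
      exact ⟨0, a, w, d, by simp, hw, hd, by rw [σ₁_eq]; group⟩
  · exact ⟨1, 1, σ₁⁻¹ * w, d, by simp, hw.cons_σ₁_inv, hd, by rw [σ₁_eq, C]; group⟩
  · exact ⟨0, 1, σ₂ * w, d, by simp, hw.cons_σ₂, hd, by rw [σ₂_eq]; group⟩

lemma a_inv_eq : a⁻¹ = C ^ (-1 : ℤ) * (a * a) := by rw [← a_cube]; group

lemma Δ_inv_eq : Δ⁻¹ = C ^ (-1 : ℤ) * Δ := by rw [C]; group

lemma NormalForm.a_inv_mul {g : B3} (hg : NormalForm g) : NormalForm (a⁻¹ * g) :=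
  hg.a_mul.a_mul.of_eq (-1) (by rw [a_inv_eq]; simp only [mul_assoc])

lemma NormalForm.Δ_inv_mul {g : B3} (hg : NormalForm g) : NormalForm (Δ⁻¹ * g) :=
  hg.Δ_mul.of_eq (-1) (by rw [Δ_inv_eq, mul_assoc])

lemma exists_normalForm (g : B3) : NormalForm g := by
  induction g using induction_gen with
  | one => exact ⟨0, 1, 1, 1, by simp, .one, by simp, by simp⟩
  | h₁ g ih => rw [σ₁_eq, mul_assoc]; exact ih.Δ_mul.a_inv_mul
  | h₁' g ih => rw [σ₁_eq, mul_inv_rev, inv_inv, mul_assoc]; exact ih.a_mul.Δ_inv_mul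
  | h₂ g ih => rw [σ₂_eq, mul_assoc]; exact ih.a_inv_mul.Δ_mul
  | h₂' g ih => rw [σ₂_eq, mul_inv_rev, inv_inv, mul_assoc]; exact ih.Δ_inv_mul.a_mul

lemma S_T_rel : S * T * S = T * S * T := by decide

/-- The homomorphism `B₃ → SL₂(ℤ)` with `σ₁ ↦ S` and `σ₂ ↦ T`. -/
def φ : B3 →* Matrix.SpecialLinearGroup (Fin 2) ℤ :=
  PresentedGroup.toGroup (f := ![S, T]) (by
    rintro r rfl
    simp only [map_mul, map_inv, FreeGroup.lift_apply_of, mul_inv_eq_one]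
    exact S_T_rel)

lemma φ_σ₁ : φ σ₁ = S := PresentedGroup.toGroup.of _

lemma φ_σ₂ : φ σ₂ = T := PresentedGroup.toGroup.of _

lemma φ_a : φ a = S * T := by rw [a, map_mul, φ_σ₁, φ_σ₂]

lemma φ_Δ : φ Δ = S * T * S := by rw [Δ, map_mul, map_mul, φ_σ₁, φ_σ₂]

lemma φ_C : φ C = -1 := by rw [C, map_mul, φ_Δ]; decide

lemma S_inv_coe : ((S⁻¹ : Matrix.SpecialLinearGroup (Fin 2) ℤ) : Matrix (Fin 2) (Fin 2) ℤ)
    = !![1, -1; 0, 1] := by decide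

lemma φ_surjective : Function.Surjective φ := by
  rw [← MonoidHom.range_eq_top, eq_top_iff,
    ← SpecialLinearGroup.SL2Z_generators, Subgroup.closure_le]
  rintro x (rfl | rfl)
  · exact ⟨Δ⁻¹, by rw [map_inv, φ_Δ]; decide⟩
  · exact ⟨σ₁, by rw [φ_σ₁]; decide⟩

/-- Sign pattern of the image of a word in `σ₂` and `σ₁⁻¹`. -/
lemma PosWord.matrix {w : B3} (hw : PosWord w) :
    0 < (φ w) 0 0 ∧ 0 < (φ w) 1 1 ∧ (φ w) 0 1 ≤ 0 ∧ (φ w) 1 0 ≤ 0 ∧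
      (w = 1 ∨ (φ w) 0 1 + (φ w) 1 0 < 0) := by
  induction hw with
  | one => simp
  | @cons_σ₂ w _ ih =>
    obtain ⟨h1, h2, h3, h4, -⟩ := ih
    have e : ((φ (σ₂ * w) : Matrix.SpecialLinearGroup (Fin 2) ℤ) : Matrix (Fin 2) (Fin 2) ℤ)
        = !![1, 0; -1, 1] * (φ w : Matrix (Fin 2) (Fin 2) ℤ) := by
      rw [map_mul, φ_σ₂]; rfl
    simp only [e, Matrix.mul_apply, Fin.sum_univ_two]
    simp
    refine ⟨?_, ?_, ?_, ?_, Or.inr ?_⟩ <;> linarith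
  | @cons_σ₁_inv w _ ih =>
    obtain ⟨h1, h2, h3, h4, -⟩ := ih
    have e : ((φ (σ₁⁻¹ * w) : Matrix.SpecialLinearGroup (Fin 2) ℤ) : Matrix (Fin 2) (Fin 2) ℤ)
        = !![1, -1; 0, 1] * (φ w : Matrix (Fin 2) (Fin 2) ℤ) := by
      rw [map_mul, map_inv, φ_σ₁, Matrix.SpecialLinearGroup.coe_mul, S_inv_coe]
    simp only [e, Matrix.mul_apply, Fin.sum_univ_two]
    simp
    refine ⟨?_, ?_, ?_, ?_, Or.inr ?_⟩ <;> linarith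

lemma Δ_pow_four : Δ ^ 4 = C ^ (2 : ℤ) := by
  rw [C, ← pow_two, zpow_ofNat, ← pow_mul]

lemma ker_φ : φ.ker = Subgroup.zpowers (Δ ^ 4) := by
  apply le_antisymm
  · intro g hg
    rw [MonoidHom.mem_ker] at hg
    obtain ⟨k, b, w, d, hb, hw, hd, rfl⟩ := exists_normalForm g
    obtain ⟨h1, h2, h3, h4, h5⟩ := hw.matrix
    rw [map_mul, map_zpow, φ_C, map_mul, map_mul] at hg
    -- `φ w = ± φ(b)⁻¹ φ(d)⁻¹`, where the sign is `(-1) ^ k`.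
    have key : φ w = (φ b)⁻¹ * ((-1) ^ k)⁻¹ * (φ d)⁻¹ := by
      have h' : φ b * φ w * φ d = ((-1) ^ k)⁻¹ := eq_inv_of_mul_eq_one_right hg
      rw [← h', eq_mul_inv_iff_mul_eq, eq_comm]; group
    have hs : ((-1 : Matrix.SpecialLinearGroup (Fin 2) ℤ) ^ k = 1 ∧ Even k) ∨
        (-1 : Matrix.SpecialLinearGroup (Fin 2) ℤ) ^ k = -1 := by
      rcases Int.even_or_odd k with hk | hk
      · exact .inl ⟨hk.neg_one_zpow, hk⟩
      · exact .inr hk.neg_one_zpow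
    have hsign : 0 < (φ w) 0 0 ∧ 0 < (φ w) 1 1 ∧ (φ w) 0 1 ≤ 0 ∧ (φ w) 1 0 ≤ 0 :=
      ⟨h1, h2, h3, h4⟩
    -- Only `b = 1`, `d = 1`, `k` even is compatible with the sign pattern of `φ w`.
    rcases hb with rfl | rfl | rfl <;> rcases hd with rfl | rfl <;>
      rcases hs with ⟨hs, hk⟩ | hs <;> rw [hs] at key <;>
      simp only [map_one, map_inv, φ_a, φ_Δ] at key <;>
      try exact absurd (key ▸ hsign) (by decide)
    obtain ⟨j, rfl⟩ := hk.two_dvd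
    have hw1 : w = 1 := h5.resolve_right (by rw [key]; decide)
    exact ⟨j, by rw [hw1, Δ_pow_four, zpow_mul]; simp⟩
  · rw [Subgroup.zpowers_le, MonoidHom.mem_ker, Δ_pow_four, map_zpow, φ_C]
    decide

end BraidSL2

theorem braid_to_sl2_exists :
    ∃ φ : B3 →* Matrix.SpecialLinearGroup (Fin 2) ℤ,
      φ σ₁ = S ∧ φ σ₂ = T ∧ Function.Surjective φ ∧
      φ.ker = Subgroup.zpowers (Δ ^ 4) :=
  ⟨BraidSL2.φ, BraidSL2.φ_σ₁, BraidSL2.φ_σ₂, BraidSL2.φ_surjective, BraidSL2.ker_φ⟩
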